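/- Let G be a graph with X the projective toric subset it parameterizes, and let {v_1,...,v_r} be an independent set of r distinct vertices of G, i.e., no edge of G joins two vertices of this set. Assume there is an edge of G neither of whose endpoints belongs to {v_1,...,v_r}. Then reg(G) ≥ r(q−2). -/

import Mathlib

open MvPolynomial

/-- A finite multigraph without loops: each edge `e` has two distinct endpoints
`fst e` and `snd e`.  Multiple edges with the same endpoints are allowed. -/
structure Multigraph (V E : Type) : Type where
  fst : E → V
  snd : E → V
  ne : ∀ e, fst e ≠ snd e

namespace Multigraph

variable {V E : Type}

/-- Vertex `v` is an endpoint of the edge `e`. -/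
def Incident (G : Multigraph V E) (v : V) (e : E) : Prop :=
  G.fst e = v ∨ G.snd e = v

instance (G : Multigraph V E) [DecidableEq V] (v : V) : DecidablePred (G.Incident v) :=
  fun e => inferInstanceAs (Decidable (G.fst e = v ∨ G.snd e = v))

/-- The degree of a vertex: the number of edges incident to it. -/
noncomputable def degree (G : Multigraph V E) (v : V) : ℕ :=
  Nat.card {e : E // G.Incident v e}

/-- The graph has no isolated vertices. -/
def NoIsolated (G : Multigraph V E) : Prop :=
  ∀ v : V, ∃ e : E, G.Incident v e

variable (K : Type) [Field K] [Fintype K]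

/-- The point of the affine torus associated with an assignment `x` of nonzero
scalars to the vertices: its coordinate at an edge `e = {v,w}` is `x v * x w`. -/
def point (G : Multigraph V E) (x : V → Kˣ) : E → K :=
  fun e => (x (G.fst e) : K) * (x (G.snd e) : K)

/-- The projective toric subset `X` parameterized by `G`, realized as the set of
`Kˣ`-orbits (i.e. projective points) of the points `G.point K x`, `x : V → Kˣ`. -/
def toricSet (G : Multigraph V E) : Set (Set (E → K)) :=
  Set.range fun x : V → Kˣ => MulAction.orbit Kˣ (G.point K x)

/-- The vanishing ideal `I(X)` of the projective toric subset parameterized by `G`: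
the ideal of all polynomials each of whose homogeneous components vanishes at the
point `G.point K x` for every `x : V → Kˣ`. -/
def vanishingIdeal (G : Multigraph V E) : Ideal (MvPolynomial E K) where
  carrier := {f | ∀ (x : V → Kˣ) (d : ℕ), eval (G.point K x) (homogeneousComponent d f) = 0}
  zero_mem' := by intro x d; simp
  add_mem' := by
    intro a b ha hb x d
    rw [map_add, map_add, ha x d, hb x d, add_zero]
  smul_mem' := by
    intro c f hf x n
    rw [smul_eq_mul, ← sum_homogeneousComponent f, Finset.mul_sum, map_sum, map_sum]
    refine Finset.sum_eq_zero fun d _ => ?_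
    nth_rewrite 1 [← sum_homogeneousComponent c]
    rw [Finset.sum_mul, map_sum, map_sum]
    refine Finset.sum_eq_zero fun e _ => ?_
    have h1 : (homogeneousComponent e c * homogeneousComponent d f).IsHomogeneous (e + d) :=
      (homogeneousComponent_isHomogeneous e c).mul (homogeneousComponent_isHomogeneous d f)
    rw [homogeneousComponent_of_mem ((mem_homogeneousSubmodule _ _).mpr h1)]
    split_ifs
    · rw [map_mul, hf x d, mul_zero]
    · simp

/-- The Hilbert function of `S/I(X)`: the dimension over `K` of the degree-`d`
homogeneous component of the quotient, realized as the image of the space of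
degree-`d` homogeneous polynomials in the quotient. -/
noncomputable def hilbert (G : Multigraph V E) (d : ℕ) : ℕ :=
  Module.finrank K
    ((homogeneousSubmodule E K d).map (Ideal.Quotient.mkₐ K (G.vanishingIdeal K)).toLinearMap)

/-- The regularity `reg G`: the least `d` such that the Hilbert function of `S/I(X)`
at `d` equals the number of points of `X`. -/
noncomputable def reg (G : Multigraph V E) : ℕ :=
  sInf {d : ℕ | G.hilbert K d = (G.toricSet K).ncard}

/-- The graph obtained from `G` by deleting a vertex `v` and all edges incident
to it. -/
def deleteVert (G : Multigraph V E) (v : V) :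
    Multigraph {w : V // w ≠ v} {e : E // ¬ G.Incident v e} where
  fst e := ⟨G.fst e.1, fun h => e.2 (Or.inl h)⟩
  snd e := ⟨G.snd e.1, fun h => e.2 (Or.inr h)⟩
  ne e h := G.ne e.1 (congrArg Subtype.val h)

/-- The graph obtained from `G` by identifying the vertex `v₂` with the vertex `v₁`:
the edges are the same, and every endpoint equal to `v₂` is replaced by `v₁`.
This requires that `{v₁, v₂}` is a non-edge of `G`, so that no loops are created. -/
def identifyVert [DecidableEq V] (G : Multigraph V E) (v₁ v₂ : V) (h12 : v₁ ≠ v₂)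
    (h : ∀ e, ¬ (G.Incident v₁ e ∧ G.Incident v₂ e)) :
    Multigraph {w : V // w ≠ v₂} E where
  fst e := ⟨if G.fst e = v₂ then v₁ else G.fst e, by split_ifs with hh; exacts [h12, hh]⟩
  snd e := ⟨if G.snd e = v₂ then v₁ else G.snd e, by split_ifs with hh; exacts [h12, hh]⟩
  ne := by
    intro e heq
    rw [Subtype.ext_iff] at heq
    simp only at heq
    split_ifs at heq with h1 h2 h2
    · exact G.ne e (h1.trans h2.symm)
    · exact h e ⟨Or.inr heq.symm, Or.inl h1⟩
    · exact h e ⟨Or.inl heq, Or.inr h2⟩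
    · exact G.ne e heq

/-- The subgraph of `G` determined by a set `A` of edges of `G`, together with all
endpoints of those edges (so it has no isolated vertices). -/
def subgraph [DecidableEq V] (G : Multigraph V E) (A : Finset E) :
    Multigraph {v : V // ∃ e ∈ A, G.Incident v e} {e : E // e ∈ A} where
  fst e := ⟨G.fst e.1, e.1, e.2, Or.inl rfl⟩
  snd e := ⟨G.snd e.1, e.1, e.2, Or.inr rfl⟩
  ne e h := G.ne e.1 (congrArg Subtype.val h)

end Multigraph

/-- The vertex of the parallel composition of paths of lengths `k i` lying on the
`i`-th path at distance `j` from the common initial vertex:  `j = 0` gives the common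
initial vertex, `j = k i` the common terminal vertex, and `0 < j < k i` gives the
`j`-th interior vertex of the `i`-th path. -/
def pcVert {ι : Type} (k : ι → ℕ) (i : ι) (j : ℕ) :
    Bool ⊕ ((i : ι) × Fin (k i - 1)) :=
  if h0 : j = 0 then Sum.inl false
  else if h : j < k i then Sum.inr ⟨i, ⟨j - 1, by omega⟩⟩
  else Sum.inl true

/-- The parallel composition of the family of paths `P i` of lengths `k i` (`i : ι`):
the `i`-th path has `k i` edges indexed by `Fin (k i)`, its `j`-th edge joining the
vertices of the `i`-th path at distances `j` and `j + 1` from the common initial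
vertex.  All the initial vertices of the paths are identified to a single vertex and
all the terminal vertices are identified to a single vertex. -/
def parallelComp {ι : Type} (k : ι → ℕ) :
    Multigraph (Bool ⊕ ((i : ι) × Fin (k i - 1))) ((i : ι) × Fin (k i)) where
  fst e := pcVert k e.1 e.2.1
  snd e := pcVert k e.1 (e.2.1 + 1)
  ne := by
    rintro ⟨i, j⟩ h
    have hj := j.2
    simp only [pcVert] at h
    split_ifs at h <;> simp_all <;> omega

/-- The monomial `f i`: the product of the edges of the `i`-th path of the parallel
composition in odd positions (positions `1, 3, 5, ...`, i.e. indices `0, 2, 4, ...`). -/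
noncomputable def oddProd {ι : Type} (K : Type) [Field K] (k : ι → ℕ) (i : ι) :
    MvPolynomial ((i : ι) × Fin (k i)) K :=
  ∏ m : Fin ((k i + 1) / 2), X ⟨i, ⟨2 * m.1, by have := m.2; omega⟩⟩

/-- The monomial `g i`: the product of the edges of the `i`-th path of the parallel
composition in even positions (positions `2, 4, 6, ...`, i.e. indices `1, 3, 5, ...`). -/
noncomputable def evenProd {ι : Type} (K : Type) [Field K] (k : ι → ℕ) (i : ι) :
    MvPolynomial ((i : ι) × Fin (k i)) K :=
  ∏ m : Fin (k i / 2), X ⟨i, ⟨2 * m.1 + 1, by have := m.2; omega⟩⟩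

/-! A form of degree `d` on `X` is recorded by its values at the points of `X`, so `HF_G(d) = |X|`
exactly when every point of `X` is separated from all the others by a form of degree `d`; this
happens for some `d`, hence for `d = reg G`. Give the independent vertices arbitrary nonzero weights
`y` and all other vertices weight `1`. Each edge then has weight `1` or some `y i`, and the edge
avoiding the independent set has weight `1`, so distinct `y` give distinct points of `X`. A
separating form of degree `d` restricts to a polynomial `g` in `r` variables of degree at most `d`
which is nonzero at exactly one point of `(K^*)^r`. The product of `g` with all the variables is
then nonzero at exactly one point of `K^r`, so the sum of its values over `K^r` is nonzero, which
by the Chevalley–Warning argument forces its degree, at most `d + r`, to be at least `r(q - 1)`. -/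

section LinearAlgebra

theorem finrank_map_eq_finrank_map_of_ker_eq {R M N P : Type*} [Ring R]
    [AddCommGroup M] [AddCommGroup N] [AddCommGroup P] [Module R M] [Module R N] [Module R P]
    {W : Submodule R M} {A : M →ₗ[R] N} {B : M →ₗ[R] P} (h : ∀ w ∈ W, A w = 0 ↔ B w = 0) :
    Module.finrank R (W.map A) = Module.finrank R (W.map B) := by
  have hker : LinearMap.ker (A.domRestrict W) = LinearMap.ker (B.domRestrict W) := by
    ext ⟨w, hw⟩
    exact h w hw
  rw [← LinearMap.range_domRestrict, ← LinearMap.range_domRestrict]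
  exact ((A.domRestrict W).quotKerEquivRange.symm ≪≫ₗ Submodule.quotEquivOfEq _ _ hker ≪≫ₗ
    (B.domRestrict W).quotKerEquivRange).finrank_eq

theorem submodule_pi_eq_top_iff {K ι : Type*} [DivisionRing K] [Finite ι]
    {W : Submodule K (ι → K)} :
    W = ⊤ ↔ ∀ i, ∃ w ∈ W, w i ≠ 0 ∧ ∀ j ≠ i, w j = 0 := by
  classical
  have := Fintype.ofFinite ι
  refine ⟨fun hW i => ⟨Pi.single i 1, by simp [hW], by simp, fun j hj => by simp [hj]⟩, fun h => ?_⟩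
  rw [eq_top_iff, ← (Pi.basisFun K ι).span_eq, Submodule.span_le, Set.range_subset_iff]
  intro i
  obtain ⟨w, hwW, hwi, hw⟩ := h i
  have hsingle : Pi.basisFun K ι i = (w i)⁻¹ • w := by
    ext j
    obtain rfl | hj := eq_or_ne j i
    · simp [hwi]
    · simp [hj, hw j hj]
  exact hsingle ▸ W.smul_mem _ hwW

end LinearAlgebra

section Polynomials

variable {σ τ R : Type*}

theorem eval_smul_of_isHomogeneous [CommSemiring R] {f : MvPolynomial σ R} {d : ℕ}
    (hf : f.IsHomogeneous d) (c : R) (a : σ → R) : eval (c • a) f = c ^ d * eval a f := by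
  simp only [eval_eq, Finset.mul_sum]
  refine Finset.sum_congr rfl fun m hm => ?_
  rw [hf.degree_eq_sum_deg_support hm, ← Finset.prod_pow_eq_pow_sum]
  simp only [Pi.smul_apply, smul_eq_mul, mul_pow, Finset.prod_mul_distrib]
  ring

theorem totalDegree_aeval_le_of_totalDegree_le_one [CommSemiring R] {s : σ → MvPolynomial τ R}
    (hs : ∀ i, (s i).totalDegree ≤ 1) (f : MvPolynomial σ R) :
    (aeval s f).totalDegree ≤ f.totalDegree := by
  rw [aeval_def, eval₂_eq]
  refine totalDegree_finsetSum_le fun m hm => ?_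
  calc (C (coeff m f) * ∏ i ∈ m.support, s i ^ m i).totalDegree
      ≤ ∑ i ∈ m.support, (s i ^ m i).totalDegree := by
        refine (totalDegree_mul _ _).trans ?_
        rw [totalDegree_C, zero_add]
        exact totalDegree_finsetProd _ _
    _ ≤ ∑ i ∈ m.support, m i := Finset.sum_le_sum fun i _ =>
        (totalDegree_pow _ _).trans (mul_le_of_le_one_right (Nat.zero_le _) (hs i))
    _ ≤ f.totalDegree := le_totalDegree hm

end Polynomials

section FiniteField

variable {σ K : Type*} [Fintype σ] [Field K] [Fintype K]

theorem card_mul_card_sub_two_le_totalDegree {g : MvPolynomial σ K} {a : σ → Kˣ}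
    (ha : eval (fun i => (a i : K)) g ≠ 0)
    (hg : ∀ y ≠ a, eval (fun i => (y i : K)) g = 0) :
    Fintype.card σ * (Fintype.card K - 2) ≤ g.totalDegree := by
  classical
  let h : MvPolynomial σ K := g * ∏ i, X i
  have eval_h (y : σ → K) : eval y h = eval y g * ∏ i, y i := by
    simp only [h, map_mul, map_prod, eval_X]
  have h_degree : h.totalDegree ≤ g.totalDegree + Fintype.card σ := by
    refine (totalDegree_mul _ _).trans (Nat.add_le_add_left ?_ _)
    simpa using totalDegree_finsetProd Finset.univ (X : σ → MvPolynomial σ K)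
  have h_zero (y : σ → K) (hy : y ≠ fun i => (a i : K)) : eval y h = 0 := by
    rw [eval_h]
    by_cases hunit : ∀ i, IsUnit (y i)
    · lift y to σ → Kˣ using hunit
      rw [hg y fun hya => hy (hya ▸ rfl), zero_mul]
    · obtain ⟨i, hi⟩ := not_forall.mp hunit
      rw [Finset.prod_eq_zero (Finset.mem_univ i) (by simpa using hi), mul_zero]
  have h_sum : ∑ y, eval y h ≠ 0 := by
    rw [Fintype.sum_eq_single _ h_zero, eval_h]
    exact mul_ne_zero ha (Finset.prod_ne_zero_iff.mpr fun i _ => (a i).ne_zero)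
  have h_large := not_lt.mp (mt (sum_eval_eq_zero h) h_sum)
  have card_split : Fintype.card K - 1 = (Fintype.card K - 2) + 1 := by
    have := Fintype.one_lt_card (α := K)
    omega
  rw [card_split] at h_large
  linarith

/-- A form of degree `|σ|(q - 1)` which, if `P i₀ ≠ 0`, singles out the multiples of `P` among the
points whose coordinate `i₀` is nonzero: it vanishes at all the others. It is the product over `i`
of `1 - (Pᵢ - Pᵢ₀ Xᵢ)^(q-1)`, homogenized with `X i₀`. -/
noncomputable def homogeneousIndicator (i₀ : σ) (P : σ → K) : MvPolynomial σ K :=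
  ∏ i, (X i₀ ^ (Fintype.card K - 1) - (C (P i) * X i₀ - C (P i₀) * X i) ^ (Fintype.card K - 1))

theorem isHomogeneous_homogeneousIndicator (i₀ : σ) (P : σ → K) :
    (homogeneousIndicator i₀ P).IsHomogeneous (Fintype.card σ * (Fintype.card K - 1)) := by
  have hfactor (i : σ) : (X i₀ ^ (Fintype.card K - 1) -
      (C (P i) * X i₀ - C (P i₀) * X i) ^ (Fintype.card K - 1)).IsHomogeneous
        (Fintype.card K - 1) := by
    have hlin : (C (P i) * X i₀ - C (P i₀) * X i).IsHomogeneous 1 :=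
      (isHomogeneous_C_mul_X _ _).sub (isHomogeneous_C_mul_X _ _)
    exact (isHomogeneous_X_pow _ _).sub (by simpa using hlin.pow (Fintype.card K - 1))
  simpa [homogeneousIndicator] using IsHomogeneous.prod Finset.univ _ _ fun i _ => hfactor i

theorem eval_homogeneousIndicator_self {i₀ : σ} {P : σ → K} (hP : P i₀ ≠ 0) :
    eval P (homogeneousIndicator i₀ P) = 1 := by
  have hcard : Fintype.card K - 1 ≠ 0 := Nat.sub_ne_zero_of_lt Fintype.one_lt_card
  simp only [homogeneousIndicator, map_prod, map_sub, map_pow, map_mul, eval_X, eval_C]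
  refine Finset.prod_eq_one fun i _ => ?_
  rw [FiniteField.pow_card_sub_one_eq_one _ hP, mul_comm, sub_self, zero_pow hcard, sub_zero]

theorem eval_homogeneousIndicator_eq_zero {i₀ : σ} {P Q : σ → K} (hQ : Q i₀ ≠ 0)
    (hPQ : ∃ i, P i * Q i₀ ≠ P i₀ * Q i) : eval Q (homogeneousIndicator i₀ P) = 0 := by
  obtain ⟨i, hi⟩ := hPQ
  simp only [homogeneousIndicator, map_prod, map_sub, map_pow, map_mul, eval_X, eval_C]
  refine Finset.prod_eq_zero (Finset.mem_univ i) ?_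
  rw [FiniteField.pow_card_sub_one_eq_one _ hQ,
    FiniteField.pow_card_sub_one_eq_one _ (sub_ne_zero.mpr hi), sub_self]

end FiniteField

namespace Multigraph

section Separation

variable {V E K : Type} [Field K] {G : Multigraph V E}

theorem point_ne_zero (x : V → Kˣ) (e : E) : G.point K x e ≠ 0 :=
  mul_ne_zero (Units.ne_zero _) (Units.ne_zero _)

variable (G) in
/-- The point of the projective toric subset with parameters `x`. -/
def toricPoint (x : V → Kˣ) : G.toricSet K :=
  ⟨MulAction.orbit Kˣ (G.point K x), x, rfl⟩

theorem toricPoint_surjective : Function.Surjective (G.toricPoint (K := K)) := by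
  rintro ⟨_, x, rfl⟩
  exact ⟨x, rfl⟩

theorem toricPoint_eq_iff {x y : V → Kˣ} :
    G.toricPoint x = G.toricPoint y ↔ ∃ c : Kˣ, (c : K) • G.point K y = G.point K x :=
  Subtype.ext_iff.trans MulAction.orbit_eq_iff

theorem toricPoint_eq_of_forall_mul_eq {x y : V → Kˣ} {e₀ : E}
    (h : ∀ e, G.point K x e * G.point K y e₀ = G.point K x e₀ * G.point K y e) :
    G.toricPoint x = G.toricPoint y := by
  have hy := G.point_ne_zero y e₀
  refine toricPoint_eq_iff.mpr
    ⟨Units.mk0 _ (div_ne_zero (G.point_ne_zero x e₀) hy), funext fun e => ?_⟩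
  rw [Units.val_mk0, Pi.smul_apply, smul_eq_mul, div_mul_eq_mul_div, ← h e,
    mul_div_cancel_right₀ _ hy]

theorem eval_point_eq_zero_iff_of_toricPoint_eq {f : MvPolynomial E K} {d : ℕ}
    (hf : f.IsHomogeneous d) {x y : V → Kˣ} (hxy : G.toricPoint x = G.toricPoint y) :
    eval (G.point K x) f = 0 ↔ eval (G.point K y) f = 0 := by
  obtain ⟨c, hc⟩ := toricPoint_eq_iff.mp hxy
  rw [← hc, eval_smul_of_isHomogeneous hf, mul_eq_zero_iff_left (pow_ne_zero d c.ne_zero)]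

/-- Parameters of a point of the projective toric subset, fixed once and for all. -/
noncomputable def toricRep (p : G.toricSet K) : V → Kˣ :=
  Function.surjInv toricPoint_surjective p

theorem toricPoint_toricRep (p : G.toricSet K) : G.toricPoint (toricRep p) = p :=
  Function.surjInv_eq toricPoint_surjective p

variable (G K) in
/-- Evaluation of polynomials at the points of the projective toric subset. A form has no
well-defined value at a projective point, so it is evaluated at the representative given by
`toricRep`. -/
noncomputable def toricEval : MvPolynomial E K →ₗ[K] (G.toricSet K → K) :=
  LinearMap.pi fun p => (aeval (G.point K (toricRep p))).toLinearMap

theorem toricEval_apply (f : MvPolynomial E K) (p : G.toricSet K) :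
    G.toricEval K f p = eval (G.point K (toricRep p)) f := by
  simp [toricEval, aeval_eq_eval]

theorem toricEval_toricPoint_eq_zero_iff {f : MvPolynomial E K} {d : ℕ} (hf : f.IsHomogeneous d)
    (x : V → Kˣ) : G.toricEval K f (G.toricPoint x) = 0 ↔ eval (G.point K x) f = 0 := by
  rw [toricEval_apply, eval_point_eq_zero_iff_of_toricPoint_eq hf (toricPoint_toricRep _)]

theorem mem_vanishingIdeal_iff_toricEval_eq_zero {f : MvPolynomial E K} {d : ℕ}
    (hf : f.IsHomogeneous d) : f ∈ G.vanishingIdeal K ↔ G.toricEval K f = 0 := by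
  rw [funext_iff, toricPoint_surjective.forall]
  simp only [Pi.zero_apply, toricEval_toricPoint_eq_zero_iff hf]
  refine ⟨fun h x => ?_, fun h x n => ?_⟩
  · simpa only [homogeneousComponent_eq_self hf] using h x d
  · rw [homogeneousComponent_of_mem hf]
    split_ifs
    · exact h x
    · exact map_zero _

theorem hilbert_eq_finrank_map_toricEval (d : ℕ) :
    G.hilbert K d = Module.finrank K ((homogeneousSubmodule E K d).map (G.toricEval K)) :=
  finrank_map_eq_finrank_map_of_ker_eq fun _ hf =>
    Ideal.Quotient.eq_zero_iff_mem.trans (mem_vanishingIdeal_iff_toricEval_eq_zero hf)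

theorem hilbert_eq_ncard_toricSet_iff_map_toricEval_eq_top [Finite (G.toricSet K)] {d : ℕ} :
    G.hilbert K d = (G.toricSet K).ncard ↔
      (homogeneousSubmodule E K d).map (G.toricEval K) = ⊤ := by
  have := Fintype.ofFinite (G.toricSet K)
  have hncard : (G.toricSet K).ncard = Module.finrank K (G.toricSet K → K) := by
    rw [Module.finrank_fintype_fun_eq_card, Set.ncard_eq_toFinset_card', Set.toFinset_card]
  rw [hilbert_eq_finrank_map_toricEval, hncard]
  exact ⟨Submodule.eq_top_of_finrank_eq, fun h => by rw [h, finrank_top]⟩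

variable (G) in
/-- `f` is a form of degree `d` separating the point of `X` with parameters `x` from all other
points of `X`. -/
structure IsSeparator (d : ℕ) (x : V → Kˣ) (f : MvPolynomial E K) : Prop where
  isHomogeneous : f.IsHomogeneous d
  eval_ne_zero : eval (G.point K x) f ≠ 0
  eval_eq_zero : ∀ y, G.toricPoint y ≠ G.toricPoint x → eval (G.point K y) f = 0

theorem hilbert_eq_ncard_toricSet_iff [Finite (G.toricSet K)] {d : ℕ} :
    G.hilbert K d = (G.toricSet K).ncard ↔ ∀ x : V → Kˣ, ∃ f, G.IsSeparator d x f := by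
  rw [hilbert_eq_ncard_toricSet_iff_map_toricEval_eq_top, submodule_pi_eq_top_iff,
    toricPoint_surjective.forall]
  refine forall_congr' fun x => ⟨?_, ?_⟩
  · rintro ⟨_, ⟨f, hf, rfl⟩, hne, hzero⟩
    exact ⟨f, hf, (toricEval_toricPoint_eq_zero_iff hf x).not.mp hne,
      fun y hy => (toricEval_toricPoint_eq_zero_iff hf y).mp (hzero _ hy)⟩
  · rintro ⟨f, hf, hne, hzero⟩
    exact ⟨_, ⟨f, hf, rfl⟩, (toricEval_toricPoint_eq_zero_iff hf x).not.mpr hne,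
      toricPoint_surjective.forall.mpr fun y hy =>
        (toricEval_toricPoint_eq_zero_iff hf y).mpr (hzero y hy)⟩

theorem isSeparator_homogeneousIndicator [Fintype E] [Fintype K] (e₀ : E) (x : V → Kˣ) :
    G.IsSeparator (Fintype.card E * (Fintype.card K - 1)) x
      (homogeneousIndicator e₀ (G.point K x)) where
  isHomogeneous := isHomogeneous_homogeneousIndicator _ _
  eval_ne_zero := by
    rw [eval_homogeneousIndicator_self (G.point_ne_zero x e₀)]
    exact one_ne_zero
  eval_eq_zero y hy := by
    refine eval_homogeneousIndicator_eq_zero (G.point_ne_zero y e₀) ?_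
    contrapose! hy
    exact (toricPoint_eq_of_forall_mul_eq hy).symm

theorem hilbert_reg [Finite E] [Finite K] [Nonempty E] :
    G.hilbert K (G.reg K) = (G.toricSet K).ncard := by
  have := Fintype.ofFinite E
  have := Fintype.ofFinite K
  have hseparated : G.hilbert K (Fintype.card E * (Fintype.card K - 1)) = (G.toricSet K).ncard :=
    hilbert_eq_ncard_toricSet_iff.mpr fun x =>
      ⟨_, isSeparator_homogeneousIndicator (Classical.arbitrary E) x⟩
  exact Nat.sInf_mem (s := {d | G.hilbert K d = (G.toricSet K).ncard}) ⟨_, hseparated⟩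

end Separation

section IndependentSet

variable {V E K : Type} {σ : Type*} [Field K] {G : Multigraph V E} {v : σ → V}

variable (G K v) in
/-- The substitution taking `f` to the polynomial whose value at `y` is the value of `f` at the
point with parameters `y i` at the vertex `v i` and `1` at every vertex outside the range of `v`. -/
noncomputable def restrictWeights : MvPolynomial E K →ₐ[K] MvPolynomial σ K :=
  aeval fun e => Function.extend v X 1 (G.fst e) * Function.extend v X 1 (G.snd e)

theorem eval_restrictWeights (hv : Function.Injective v) (y : σ → Kˣ) (f : MvPolynomial E K) :
    eval (fun i => (y i : K)) (G.restrictWeights K v f) =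
      eval (G.point K (Function.extend v y 1)) f := by
  have hvertex (w : V) : eval (fun i => (y i : K)) (Function.extend v X 1 w) =
      (Function.extend v y 1 w : Kˣ) := by
    by_cases hw : ∃ i, v i = w
    · obtain ⟨i, rfl⟩ := hw
      simp only [hv.extend_apply, eval_X]
    · simp only [Function.extend_apply' _ _ _ hw, Pi.one_apply, map_one, Units.val_one]
  have hscalar : (eval fun i => (y i : K)).comp (algebraMap K (MvPolynomial σ K)) = RingHom.id K :=
    RingHom.ext fun c => eval_C c
  rw [restrictWeights, map_aeval, hscalar]
  simp only [map_mul, hvertex]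
  rfl

theorem totalDegree_restrictWeights_le (hv : Function.Injective v)
    (hind : ∀ e, ¬ ((∃ i, v i = G.fst e) ∧ (∃ j, v j = G.snd e))) (f : MvPolynomial E K) :
    (G.restrictWeights K v f).totalDegree ≤ f.totalDegree := by
  have hvertex (w : V) : (Function.extend v X 1 w : MvPolynomial σ K).totalDegree ≤ 1 := by
    by_cases hw : ∃ i, v i = w
    · obtain ⟨i, rfl⟩ := hw
      rw [hv.extend_apply, totalDegree_X]
    · simp [Function.extend_apply' _ _ _ hw]
  refine totalDegree_aeval_le_of_totalDegree_le_one (fun e => ?_) f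
  obtain hfst | hsnd := not_and_or.mp (hind e)
  · rw [Function.extend_apply' _ _ _ hfst, Pi.one_apply, one_mul]
    exact hvertex _
  · rw [Function.extend_apply' _ _ _ hsnd, Pi.one_apply, mul_one]
    exact hvertex _

theorem point_extend_of_incident (hv : Function.Injective v)
    (hind : ∀ e, ¬ ((∃ i, v i = G.fst e) ∧ (∃ j, v j = G.snd e))) (y : σ → Kˣ) {i : σ} {e : E}
    (he : G.Incident (v i) e) : G.point K (Function.extend v y 1) e = y i := by
  rcases he with hfst | hsnd
  · have hout : ¬ ∃ j, v j = G.snd e := fun hj => hind e ⟨⟨i, hfst.symm⟩, hj⟩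
    simp [point, hfst, hv.extend_apply, Function.extend_apply' _ _ _ hout]
  · have hout : ¬ ∃ j, v j = G.fst e := fun hj => hind e ⟨hj, ⟨i, hsnd.symm⟩⟩
    simp [point, hsnd, hv.extend_apply, Function.extend_apply' _ _ _ hout]

theorem point_extend_of_forall_ne (y : σ → Kˣ) {e : E} (hfst : ∀ i, v i ≠ G.fst e)
    (hsnd : ∀ i, v i ≠ G.snd e) : G.point K (Function.extend v y 1) e = 1 := by
  simp [point, Function.extend_apply', hfst, hsnd]

theorem toricPoint_extend_injective (hv : Function.Injective v)
    (hind : ∀ e, ¬ ((∃ i, v i = G.fst e) ∧ (∃ j, v j = G.snd e)))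
    (hinc : ∀ i, ∃ e, G.Incident (v i) e)
    (hedge : ∃ e, (∀ i, v i ≠ G.fst e) ∧ (∀ i, v i ≠ G.snd e)) :
    Function.Injective fun y : σ → Kˣ => G.toricPoint (Function.extend v y 1) := by
  intro y z hyz
  obtain ⟨c, hc⟩ := toricPoint_eq_iff.mp hyz
  obtain ⟨e₀, hfst, hsnd⟩ := hedge
  have hc_one : (c : K) = 1 := by
    simpa [point_extend_of_forall_ne _ hfst hsnd] using congrFun hc e₀
  funext i
  obtain ⟨e, he⟩ := hinc i
  have hyzi : (z i : K) = y i := by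
    simpa [hc_one, point_extend_of_incident hv hind _ he] using congrFun hc e
  exact (Units.ext hyzi).symm

theorem IsSeparator.card_mul_card_sub_two_le [Fintype σ] [Fintype K] {d : ℕ}
    (hv : Function.Injective v)
    (hind : ∀ e, ¬ ((∃ i, v i = G.fst e) ∧ (∃ j, v j = G.snd e)))
    (hinc : ∀ i, ∃ e, G.Incident (v i) e)
    (hedge : ∃ e, (∀ i, v i ≠ G.fst e) ∧ (∀ i, v i ≠ G.snd e))
    {a : σ → Kˣ} {f : MvPolynomial E K} (hf : G.IsSeparator d (Function.extend v a 1) f) :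
    Fintype.card σ * (Fintype.card K - 2) ≤ d := by
  have hne : eval (fun i => (a i : K)) (G.restrictWeights K v f) ≠ 0 := by
    rw [eval_restrictWeights hv]
    exact hf.eval_ne_zero
  have hzero (y : σ → Kˣ) (hy : y ≠ a) :
      eval (fun i => (y i : K)) (G.restrictWeights K v f) = 0 := by
    rw [eval_restrictWeights hv]
    exact hf.eval_eq_zero _ ((toricPoint_extend_injective hv hind hinc hedge).ne hy)
  calc Fintype.card σ * (Fintype.card K - 2)
      ≤ (G.restrictWeights K v f).totalDegree := card_mul_card_sub_two_le_totalDegree hne hzero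
    _ ≤ f.totalDegree := totalDegree_restrictWeights_le hv hind f
    _ ≤ d := hf.isHomogeneous.totalDegree_le

end IndependentSet

end Multigraph

/-- **Proposition 2.8.**  Let `v 0, ..., v (r-1)` be an independent set of `r`
distinct vertices of `G` and assume there is an edge of `G` avoiding all of them.
Then `reg G ≥ r(q-2)`, where `q = |K|`. -/
theorem reg_ge_of_independent_set
    {V E : Type} [Fintype V] [DecidableEq V] [Fintype E] [DecidableEq E]
    (K : Type) [Field K] [Fintype K]
    (G : Multigraph V E) (hG : G.NoIsolated) (r : ℕ)
    (v : Fin r → V) (hv : Function.Injective v)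
    (hind : ∀ e : E, ¬ ((∃ i, v i = G.fst e) ∧ (∃ j, v j = G.snd e)))
    (hedge : ∃ e : E, (∀ i, v i ≠ G.fst e) ∧ (∀ i, v i ≠ G.snd e)) :
    r * (Fintype.card K - 2) ≤ G.reg K := by
  have : Nonempty E := ⟨hedge.choose⟩
  obtain ⟨f, hf⟩ := Multigraph.hilbert_eq_ncard_toricSet_iff.mp (G.hilbert_reg (K := K))
    (Function.extend v 1 1)
  simpa only [Fintype.card_fin] using
    hf.card_mul_card_sub_two_le hv hind (fun i => hG (v i)) hedge
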